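/- arXiv:1009.5375 — 3 statements merged into one kernel-verified Lean document; each statement's English description precedes it below -/
import Mathlib

section
/- For any positive integer n, ∑_{k=1}^n C(n,k) · (-1)^k · H_k^{(2)} = −H_n/n. -/
/-- `H n` is the harmonic number `∑_{k=1}^n 1/k`. -/
def H (n : ℕ) : ℚ := ∑ k ∈ Finset.Icc 1 n, (1 : ℚ) / k

/-- `H2 n` is the second-order harmonic number `∑_{k=1}^n 1/k²`. -/
def H2 (n : ℕ) : ℚ := ∑ k ∈ Finset.Icc 1 n, (1 : ℚ) / k ^ 2

/-!
Let `T a n = ∑_{k=0}^n C(n,k) (-1)^k a_k`. Pascal's rule says how `T` interacts with the shift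
of `a`, and `(n+1) C(n,k) = (k+1) C(n+1,k+1)` says how it interacts with division by the index.
Together they show that `T` exchanges, up to subtracting `a_0`, the operation `a_n ↦ a_n / n` and
the operation `a_n ↦ ∑_{j=1}^n a_j / j`. Since `T` sends the constant sequence `1` to `0` at
positive indices, it sends `1/n` to `-H_n`; since `H_n^{(2)} = ∑_{j=1}^n (1/j)/j`, it sends
`H_n^{(2)}` to `T (1/·) n / n = -H_n / n`.
-/

open Finset

section Ring

variable {R : Type*} [Ring R]

/-- The binomial transform `∑_{k=0}^n C(n,k) (-1)^k a_k` of a sequence `a`, normalised with the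
sign `(-1)^k` rather than the sign `(-1)^(n-k)` of the iterated forward difference. -/
def binomialTransform (a : ℕ → R) (n : ℕ) : R :=
  ∑ k ∈ range (n + 1), (n.choose k : R) * (-1) ^ k * a k

lemma binomialTransform_zero (a : ℕ → R) : binomialTransform a 0 = a 0 := by
  simp [binomialTransform]

lemma binomialTransform_add (a b : ℕ → R) (n : ℕ) :
    binomialTransform (fun k ↦ a k + b k) n = binomialTransform a n + binomialTransform b n := by
  simp only [binomialTransform, mul_add, sum_add_distrib]

lemma binomialTransform_eq_add_sum_Icc (a : ℕ → R) (n : ℕ) :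
    binomialTransform a n = a 0 + ∑ k ∈ Icc 1 n, (n.choose k : R) * (-1) ^ k * a k := by
  rw [binomialTransform, range_eq_Ico, sum_eq_sum_Ico_succ_bot n.add_one_pos, zero_add,
    Ico_add_one_right_eq_Icc]
  simp

lemma binomialTransform_succ (a : ℕ → R) (n : ℕ) :
    binomialTransform a (n + 1) =
      binomialTransform a n - binomialTransform (fun k ↦ a (k + 1)) n := by
  have pascal (k : ℕ) : ((n + 1).choose (k + 1) : R) * (-1) ^ (k + 1) * a (k + 1) =
      (n.choose (k + 1) : R) * (-1) ^ (k + 1) * a (k + 1) -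
        (n.choose k : R) * (-1) ^ k * a (k + 1) := by
    rw [Nat.choose_succ_succ', Nat.cast_add, pow_succ]
    noncomm_ring
  have extend : binomialTransform a n =
      ∑ k ∈ range (n + 2), (n.choose k : R) * (-1) ^ k * a k := by
    simp [binomialTransform, sum_range_succ _ (n + 1)]
  rw [extend, sum_range_succ', binomialTransform, sum_range_succ']
  simp only [pascal, sum_sub_distrib, binomialTransform, Nat.choose_zero_right]
  abel

lemma binomialTransform_const_succ (c : R) (n : ℕ) :
    binomialTransform (fun _ ↦ c) (n + 1) = 0 := by
  rw [binomialTransform_succ, sub_self]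

end Ring

section Field

variable {K : Type*} [Field K] [CharZero K]

lemma binomialTransform_succ_div_succ (a : ℕ → K) (n : ℕ) :
    binomialTransform (fun k ↦ a (k + 1) / (k + 1 : ℕ)) n =
      (a 0 - binomialTransform a (n + 1)) / (n + 1 : ℕ) := by
  have absorption (k : ℕ) :
      ((n + 1 : ℕ) : K) * n.choose k = (n + 1).choose (k + 1) * (k + 1 : ℕ) :=
    mod_cast Nat.add_one_mul_choose_eq n k
  have split_zero : binomialTransform a (n + 1) =
      ∑ k ∈ range (n + 1), ((n + 1).choose (k + 1) : K) * (-1) ^ (k + 1) * a (k + 1) + a 0 := by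
    rw [binomialTransform, sum_range_succ', Nat.choose_zero_right, Nat.cast_one, pow_zero, one_mul,
      one_mul]
  rw [eq_div_iff (Nat.cast_ne_zero.2 n.succ_ne_zero), split_zero, sub_add_cancel_right,
    ← sum_neg_distrib, binomialTransform, sum_mul]
  refine sum_congr rfl fun k _ ↦ ?_
  have succ_ne_zero : ((k + 1 : ℕ) : K) ≠ 0 := Nat.cast_ne_zero.2 k.succ_ne_zero
  field_simp
  linear_combination (-1) ^ k * a (k + 1) * absorption k

lemma binomialTransform_div_natCast (a : ℕ → K) (n : ℕ) :
    binomialTransform (fun k ↦ a k / k) n =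
      ∑ m ∈ Icc 1 n, (binomialTransform a m - a 0) / m := by
  induction n with
  | zero => simp [binomialTransform_zero]
  | succ n ih =>
    rw [binomialTransform_succ, ih, binomialTransform_succ_div_succ,
      sum_Icc_succ_top n.succ_pos, ← neg_sub (binomialTransform a (n + 1)), neg_div, sub_neg_eq_add]

lemma binomialTransform_sum_Icc_div (a : ℕ → K) (n : ℕ) :
    binomialTransform (fun k ↦ ∑ j ∈ Icc 1 k, a j / j) n = (binomialTransform a n - a 0) / n := by
  cases n with
  | zero => simp [binomialTransform_zero]
  | succ n =>
    have partialSum_succ (k : ℕ) :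
        ∑ j ∈ Icc 1 (k + 1), a j / j = ∑ j ∈ Icc 1 k, a j / j + a (k + 1) / (k + 1 : ℕ) :=
      sum_Icc_succ_top k.succ_pos _
    simp only [binomialTransform_succ _ n, partialSum_succ, binomialTransform_add]
    rw [binomialTransform_succ_div_succ, sub_add_cancel_left, ← neg_div, neg_sub,
      ← binomialTransform_succ]

end Field

lemma binomialTransform_one_div (n : ℕ) : binomialTransform (fun k ↦ (1 : ℚ) / k) n = -H n := by
  rw [binomialTransform_div_natCast (fun _ ↦ 1), H, ← sum_neg_distrib]
  refine sum_congr rfl fun m hm ↦ ?_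
  obtain ⟨l, rfl⟩ := Nat.exists_eq_add_of_le' (mem_Icc.1 hm).1
  rw [binomialTransform_const_succ, zero_sub, neg_div]

lemma H2_eq_sum_one_div_div (n : ℕ) : H2 n = ∑ j ∈ Icc 1 n, (1 : ℚ) / j / j := by
  simp only [H2, div_div, sq]

lemma binomialTransform_H2 (n : ℕ) : binomialTransform H2 n = -H n / n := by
  -- The sequence `a k = 1 / k` has `a 0 = 1 / 0 = 0` by the convention for division by zero.
  rw [funext H2_eq_sum_one_div_div, binomialTransform_sum_Icc_div (fun k ↦ (1 : ℚ) / k),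
    binomialTransform_one_div, Nat.cast_zero, div_zero, sub_zero]

theorem stmt11 (n : ℕ) (hn : 0 < n) :
    ∑ k ∈ Finset.Icc 1 n, (n.choose k : ℚ) * (-1) ^ k * H2 k = -(H n) / n := by
  have H2_zero : H2 0 = 0 := by simp [H2]
  rw [← binomialTransform_H2, binomialTransform_eq_add_sum_Icc, H2_zero, zero_add]
end

section
/- For any positive integer n, ∑_{k=1}^n C(n,k) · ((-2)^k/k) · H_k = −2 · ∑_{1 ≤ k ≤ n, k odd} (H_n − H_{n-k})/k. -/
/-!
For every `x`, put `B n = ∑ k ≤ n, C(n,k) x ^ k H_k`. Pascal's rule and absorption give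
`B (n + 1) = (1 + x) B n + ((1 + x) ^ (n + 1) - 1) / (n + 1)`, hence
`B n = ∑ k < n, ((1 + x) ^ n - (1 + x) ^ k) / (n - k)`. The sums `∑ C(n,k) x ^ k H_k / k` and
`∑ ((1 + x) ^ k - 1) (H_n - H_{n-k}) / k` both grow by `B (n + 1) / (n + 1)` when `n` is replaced
by `n + 1`, so they agree. At `x = -2` the factor `(1 + x) ^ k - 1` is `-2` for odd `k` and `0`
for even `k`.
-/

open Finset

section CharZero

variable {K : Type*} [Field K] [CharZero K]

lemma choose_div_add_one (n k : ℕ) :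
    (n.choose k : K) / (k + 1) = (n + 1).choose (k + 1) / (n + 1) := by
  have hk : (k : K) + 1 ≠ 0 := k.cast_add_one_ne_zero
  have hn : (n : K) + 1 ≠ 0 := n.cast_add_one_ne_zero
  rw [div_eq_div_iff hk hn, mul_comm]
  exact_mod_cast Nat.add_one_mul_choose_eq n k

lemma choose_add_one_div (n : ℕ) {k : ℕ} (hk : k ≠ 0) :
    ((n + 1).choose k : K) / k = n.choose k / k + (n + 1).choose k / (n + 1) := by
  obtain ⟨j, rfl⟩ := Nat.exists_eq_add_one_of_ne_zero hk
  rw [← choose_div_add_one, Nat.choose_succ_succ']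
  push_cast
  ring

lemma sum_choose_mul_pow_div_add_one (x : K) (n : ℕ) :
    ∑ k ∈ range (n + 1), (n.choose k : K) * x ^ (k + 1) / (k + 1)
      = ((1 + x) ^ (n + 1) - 1) / (n + 1) := by
  have binomial : (1 + x) ^ (n + 1)
      = ∑ k ∈ range (n + 1), x ^ (k + 1) * ((n + 1).choose (k + 1) : K) + 1 := by
    rw [add_comm 1 x, add_pow, sum_range_succ']
    simp
  rw [binomial, add_sub_cancel_right, sum_div]
  refine sum_congr rfl fun k _ => ?_
  rw [mul_comm, mul_div_assoc, choose_div_add_one, mul_div_assoc]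

lemma cast_harmonic_add_one (n : ℕ) :
    (harmonic (n + 1) : K) = harmonic n + 1 / (n + 1) := by
  simp [harmonic_succ]

lemma cast_harmonic_eq_sum_one_div_sub (n : ℕ) :
    (harmonic n : K) = ∑ k ∈ range n, 1 / ((n : K) - k) := by
  induction n with
  | zero => simp
  | succ n ih =>
    rw [cast_harmonic_add_one, ih, sum_range_succ']
    simp

lemma sum_choose_mul_pow_mul_harmonic_add_one (x : K) (n : ℕ) :
    ∑ k ∈ range (n + 1 + 1), ((n + 1).choose k : K) * x ^ k * harmonic k
      = (1 + x) * ∑ k ∈ range (n + 1), (n.choose k : K) * x ^ k * harmonic k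
        + ((1 + x) ^ (n + 1) - 1) / (n + 1) := by
  have shift : ∑ k ∈ range (n + 1), (n.choose (k + 1) : K) * x ^ (k + 1) * harmonic (k + 1)
      = ∑ k ∈ range (n + 1), (n.choose k : K) * x ^ k * harmonic k := by
    rw [sum_range_succ, sum_range_succ' (fun k => (n.choose k : K) * x ^ k * harmonic k)]
    simp
  rw [sum_range_succ', add_mul, one_mul]
  nth_rw 1 [← shift]
  rw [← sum_choose_mul_pow_div_add_one, mul_sum, ← sum_add_distrib, ← sum_add_distrib,
    harmonic_zero, Rat.cast_zero, mul_zero, add_zero]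
  refine sum_congr rfl fun k _ => ?_
  rw [Nat.choose_succ_succ', cast_harmonic_add_one]
  push_cast
  ring

theorem sum_choose_mul_pow_mul_harmonic (x : K) (n : ℕ) :
    ∑ k ∈ range (n + 1), (n.choose k : K) * x ^ k * harmonic k
      = ∑ k ∈ range n, ((1 + x) ^ n - (1 + x) ^ k) / ((n : K) - k) := by
  induction n with
  | zero => simp
  | succ n ih =>
    rw [sum_choose_mul_pow_mul_harmonic_add_one, ih, sum_range_succ', mul_sum]
    congr 1
    · refine sum_congr rfl fun k _ => ?_
      push_cast
      rw [add_sub_add_right_eq_sub]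
      ring
    · simp

lemma sum_choose_mul_pow_div_mul_harmonic_add_one (x : K) (n : ℕ) :
    ∑ k ∈ Icc 1 (n + 1), ((n + 1).choose k : K) * x ^ k / k * harmonic k
      = ∑ k ∈ Icc 1 n, (n.choose k : K) * x ^ k / k * harmonic k
        + (∑ k ∈ range (n + 1 + 1), ((n + 1).choose k : K) * x ^ k * harmonic k) / (n + 1) := by
  have extend : ∑ k ∈ Icc 1 n, (n.choose k : K) * x ^ k / k * harmonic k
      = ∑ k ∈ Icc 1 (n + 1), (n.choose k : K) * x ^ k / k * harmonic k := by
    rw [sum_Icc_succ_top (by lia)]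
    simp
  rw [extend, sum_range_eq_add_Ico _ (by lia), Ico_add_one_right_eq_Icc, harmonic_zero,
    Rat.cast_zero, mul_zero, zero_add, sum_div, ← sum_add_distrib]
  refine sum_congr rfl fun k hk => ?_
  have hk₀ : k ≠ 0 := Nat.one_le_iff_ne_zero.mp (mem_Icc.mp hk).1
  rw [mul_div_right_comm, choose_add_one_div n hk₀]
  ring

lemma harmonic_sub_harmonic_div_add_one {n k : ℕ} (hk : k ≠ 0) (hkn : k ≤ n) :
    ((harmonic (n + 1) : K) - harmonic (n + 1 - k)) / k
      = ((harmonic n : K) - harmonic (n - k)) / k - 1 / ((n + 1 : ℕ) - k) / (n + 1) := by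
  obtain ⟨m, rfl⟩ := Nat.exists_eq_add_of_le hkn
  have hk₀ : (k : K) ≠ 0 := Nat.cast_ne_zero.mpr hk
  have hm : (m : K) + 1 ≠ 0 := m.cast_add_one_ne_zero
  have hn : (k : K) + m + 1 ≠ 0 := by exact_mod_cast (k + m).succ_ne_zero
  have hsub : ((k + m + 1 : ℕ) : K) - k = m + 1 := by push_cast; ring
  rw [hsub, add_assoc, Nat.add_sub_cancel_left, Nat.add_sub_cancel_left, ← add_assoc,
    cast_harmonic_add_one, cast_harmonic_add_one]
  push_cast
  field_simp
  ring

lemma sum_pow_sub_pow_div_eq_mul_harmonic_sub (y : K) (n : ℕ) :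
    ∑ k ∈ range n, (y ^ n - y ^ k) / ((n : K) - k)
      = (y ^ n - 1) * harmonic n - ∑ k ∈ range n, (y ^ k - 1) / ((n : K) - k) := by
  rw [cast_harmonic_eq_sum_one_div_sub, mul_sum, ← sum_sub_distrib]
  exact sum_congr rfl fun k _ => by ring

lemma sum_pow_sub_one_mul_harmonic_sub_add_one (y : K) (n : ℕ) :
    ∑ k ∈ Icc 1 (n + 1), (y ^ k - 1) * (((harmonic (n + 1) : K) - harmonic (n + 1 - k)) / k)
      = ∑ k ∈ Icc 1 n, (y ^ k - 1) * (((harmonic n : K) - harmonic (n - k)) / k)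
        + (∑ k ∈ range (n + 1), (y ^ (n + 1) - y ^ k) / ((n + 1 : ℕ) - k)) / (n + 1) := by
  have drop_zero : ∑ k ∈ range (n + 1), (y ^ k - 1) / ((n + 1 : ℕ) - k)
      = ∑ k ∈ Icc 1 n, (y ^ k - 1) / ((n + 1 : ℕ) - k) := by
    rw [sum_range_eq_add_Ico _ (by lia), Ico_add_one_right_eq_Icc]
    simp
  have split_increment : ∑ k ∈ Icc 1 n,
        (y ^ k - 1) * (((harmonic (n + 1) : K) - harmonic (n + 1 - k)) / k)
      = ∑ k ∈ Icc 1 n, (y ^ k - 1) * (((harmonic n : K) - harmonic (n - k)) / k)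
        - (∑ k ∈ Icc 1 n, (y ^ k - 1) / ((n + 1 : ℕ) - k)) / (n + 1) := by
    rw [sum_div, ← sum_sub_distrib]
    refine sum_congr rfl fun k hk => ?_
    obtain ⟨hk₁, hkn⟩ := mem_Icc.mp hk
    rw [harmonic_sub_harmonic_div_add_one (Nat.one_le_iff_ne_zero.mp hk₁) hkn]
    ring
  rw [sum_Icc_succ_top (by lia), split_increment,
    sum_pow_sub_pow_div_eq_mul_harmonic_sub, drop_zero, Nat.sub_self, harmonic_zero]
  push_cast
  ring

end CharZero

lemma sum_neg_one_pow_sub_one_mul {R : Type*} [Ring R] (s : Finset ℕ) (f : ℕ → R) :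
    ∑ k ∈ s, ((-1) ^ k - 1) * f k = -2 * ∑ k ∈ s with Odd k, f k := by
  rw [sum_filter, mul_sum]
  refine sum_congr rfl fun k _ => ?_
  split_ifs with hk
  · rw [hk.neg_one_pow]
    norm_num
  · simp [(Nat.not_odd_iff_even.mp hk).neg_one_pow]

lemma H_eq_harmonic (n : ℕ) : H n = harmonic n := by
  simp [H, harmonic_eq_sum_Icc]

theorem stmt13_general {K : Type*} [Field K] [CharZero K] (n : ℕ) (x : K) :
    ∑ k ∈ Icc 1 n, (n.choose k : K) * x ^ k / k * H k
      = ∑ k ∈ Icc 1 n, ((1 + x) ^ k - 1) * (((H n : K) - H (n - k)) / k) := by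
  simp only [H_eq_harmonic]
  induction n with
  | zero => simp
  | succ n ih =>
    rw [sum_choose_mul_pow_div_mul_harmonic_add_one, ih, sum_choose_mul_pow_mul_harmonic,
      sum_pow_sub_one_mul_harmonic_sub_add_one]

theorem stmt13 (n : ℕ) (hn : 0 < n) :
    ∑ k ∈ Finset.Icc 1 n, (n.choose k : ℚ) * (-2) ^ k / k * H k
      = -2 * ∑ k ∈ (Finset.Icc 1 n).filter (fun k => Odd k), (H n - H (n - k)) / k := by
  rw [← sum_neg_one_pow_sub_one_mul, show (-1 : ℚ) = 1 + -2 by norm_num]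
  exact_mod_cast stmt13_general n (-2 : ℚ)
end

section
/- Let p > 3 be a prime. Then ∑_{1 ≤ k ≤ (p-1)/2, k even} H_k/k ≡ (5/4)·q_p(2)² + (-1)^{(p-1)/2}·E_{p-3}/2 (mod p), where q_p(2) = (2^{p-1} − 1)/p. -/
/-- The Euler numbers: `E 0 = 1` and `∑_{0 ≤ k ≤ n, k even} C(n,k) E_{n-k} = 0` for `n ≥ 1`. -/
def eulerNumber : ℕ → ℚ
  | 0 => 1
  | n + 1 =>
      -∑ j ∈ (Finset.range (n + 1)).attach,
        if Even (n + 1 - j.1) then ((n + 1).choose (n + 1 - j.1) : ℚ) * eulerNumber j.1 else 0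
decreasing_by exact Finset.mem_range.mp j.2

/-- For rationals, `a ≡ b (mod m)` : `m` divides the numerator of `a - b` in lowest terms. -/
def ratModEq (m : ℕ) (a b : ℚ) : Prop := (m : ℤ) ∣ (a - b).num

/-!
Write `p = 2n + 1`, `q` for the Fermat quotient and compute in `ZMod p`. Twice the sum of `H_k / k`
over even `k ≤ n` is the plain sum plus the sum of `(-1)^k H_k / k`. The plain sum is
`(H_n² + ∑ 1/k²) / 2 = 2q²`, because `H_n = -2q` and `∑_{k ≤ n} 1/k² = 0`.

The reflection `k ↦ p - k` fixes `(-1)^k / k` and turns twice the alternating sum into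
`∑_{k < p} (-1)^k H_{k-1} / k` plus the correction `∑_{k ≤ n} (-1)^k / k²`. By partial fractions
`2 (-1)^k H_{k-1} / k` is the `k`-th term of the convolution square of `(-1)^k / k`, and the same
reflection evaluates the sum of that convolution as half of `(∑_{k < p} (-1)^k / k)² = 4q²`.

The correction equals `4 ∑ (-1)^k (2k)^(p-3)` by Fermat. It telescopes through the umbral identity
`(E + x + 1)^m + (E + x - 1)^m = 2 x^m`, in which `E^j` stands for the Euler number `E_j`; the
surviving end term is `(-1)^n E_{p-3}` since `2n + 1 = 0` in `ZMod p`.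
-/

open Finset Polynomial

section FiniteSums

variable {M R : Type*} [AddCommMonoid M] [CommRing R]

lemma two_mul_sum_mul_sum_range (f : ℕ → R) (n : ℕ) :
    2 * ∑ k ∈ range n, f k * ∑ i ∈ range (k + 1), f i =
      (∑ k ∈ range n, f k) ^ 2 + ∑ k ∈ range n, f k ^ 2 := by
  induction n with
  | zero => simp
  | succ n ih =>
    simp only [sum_range_succ _ n, mul_add, ih]
    ring

lemma two_mul_sum_filter_even (s : Finset ℕ) (f : ℕ → R) :
    2 * ∑ k ∈ s with Even k, f k = ∑ k ∈ s, f k + ∑ k ∈ s, (-1) ^ k * f k := by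
  rw [sum_filter, mul_sum, ← sum_add_distrib]
  refine sum_congr rfl fun k _ => ?_
  rcases Nat.even_or_odd k with hk | hk
  · rw [if_pos hk, hk.neg_one_pow]
    ring
  · rw [if_neg (Nat.not_even_iff_odd.mpr hk), hk.neg_one_pow]
    ring

lemma sum_range_filter_even (f : ℕ → M) (n : ℕ) :
    ∑ k ∈ range (2 * n + 1) with Even k, f k = ∑ k ∈ range (n + 1), f (2 * k) := by
  simp only [sum_filter]
  induction n with
  | zero => simp
  | succ n ih =>
    rw [mul_add_one, sum_range_succ, sum_range_succ, ih, sum_range_succ _ (n + 1)]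
    simp [parity_simps, mul_add_one]

lemma sum_Icc_one_eq_sum_range (f : ℕ → M) (hf : f 0 = 0) (n : ℕ) :
    ∑ k ∈ Icc 1 n, f k = ∑ k ∈ range (n + 1), f k := by
  rw [Nat.range_succ_eq_Icc_zero, ← add_sum_Ioc_eq_sum_Icc n.zero_le, hf, zero_add]
  rfl

lemma sum_range_sub_add_sum_reflect (f : ℕ → M) {m N : ℕ} (h : m ≤ N) :
    ∑ k ∈ range (N - m), f k + ∑ k ∈ range (m + 1), f (N - k) = ∑ k ∈ range (N + 1), f k := by
  rw [show N + 1 = N - m + (m + 1) by omega, sum_range_add f,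
    ← sum_range_reflect (fun k => f (N - m + k))]
  congr 1
  refine sum_congr rfl fun k hk => congrArg f ?_
  have := mem_range.mp hk
  omega

lemma sum_range_add_reflect (f : ℕ → M) (n : ℕ) :
    ∑ k ∈ range (n + 1), (f k + f (2 * n + 1 - k)) = ∑ k ∈ range (2 * n + 2), f k := by
  rw [sum_add_distrib, ← sum_range_sub_add_sum_reflect f (show n ≤ 2 * n + 1 by omega),
    show 2 * n + 1 - n = n + 1 by omega]

lemma two_mul_sum_convolution_of_symm {f : ℕ → R} {N : ℕ} (hf0 : f 0 = 0)
    (hf : ∀ k ≤ N, f (N - k) = f k) :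
    2 * ∑ m ∈ range N, ∑ k ∈ range (m + 1), f k * f (m - k) =
      (∑ k ∈ range N, f k) ^ 2 - ∑ k ∈ range N, f k ^ 2 := by
  have hfN : f N = 0 := by simpa [hf0] using hf 0 N.zero_le
  have tail : ∀ m ∈ range N, ∑ k ∈ range (N - m), f m * f k =
      f m * (∑ k ∈ range N, f k) - f m * ∑ k ∈ range (m + 1), f k := fun m hm => by
    have hmN : m < N := mem_range.mp hm
    have split := sum_range_sub_add_sum_reflect f hmN.le
    rw [sum_congr rfl fun k hk => hf k (by have := mem_range.mp hk; omega),
      sum_range_succ f N, hfN, add_zero] at split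
    rw [← mul_sum, ← split]
    ring
  rw [sum_range_diag_flip N fun i j => f i * f j, sum_congr rfl tail, sum_sub_distrib,
    ← sum_mul, mul_sub, two_mul_sum_mul_sum_range]
  ring

end FiniteSums

section HarmonicSums

variable (F : Type*) [Field F]

/-- The harmonic number `H_n` computed in the field `F`. The index `k = 0`, which contributes
`0⁻¹ = 0`, is included so that sums can be reflected by `k ↦ p - k`. -/
def harmonicSum (n : ℕ) : F := ∑ k ∈ range (n + 1), (k : F)⁻¹

/-- The summand `(-1)^k / k` of the alternating harmonic sums in `F`; it is `0` for `k = 0`. -/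
def signedInv (k : ℕ) : F := (-1) ^ k * (k : F)⁻¹

variable {F}

lemma signedInv_sq (k : ℕ) : signedInv F k ^ 2 = (k : F)⁻¹ ^ 2 := by
  rw [signedInv, mul_pow, pow_right_comm, neg_one_sq, one_pow, one_mul]

lemma inv_mul_inv_eq_inv_add_mul {a b : F} (ha : a ≠ 0) (hb : b ≠ 0) (hab : a + b ≠ 0) :
    a⁻¹ * b⁻¹ = (a + b)⁻¹ * (a⁻¹ + b⁻¹) := by
  field_simp
  ring

lemma sum_signedInv_convolution {m : ℕ} (hm : ∀ k, 0 < k → k ≤ m → (k : F) ≠ 0) :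
    ∑ k ∈ range (m + 1), signedInv F k * signedInv F (m - k) =
      2 * ((-1) ^ m * (m : F)⁻¹ * ∑ k ∈ range m, (k : F)⁻¹) := by
  cases m with
  | zero => simp [signedInv]
  | succ m =>
    have interior : ∀ k ∈ range m, signedInv F (k + 1) * signedInv F (m + 1 - (k + 1)) =
        (-1) ^ (m + 1) * ((m + 1 : ℕ) : F)⁻¹ *
          (((k + 1 : ℕ) : F)⁻¹ + ((m - 1 - k + 1 : ℕ) : F)⁻¹) := fun k hk => by
      have hkm : k < m := mem_range.mp hk
      rw [show m + 1 - (k + 1) = m - 1 - k + 1 by omega,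
        show m + 1 = (k + 1) + (m - 1 - k + 1) by omega]
      have partialFraction := inv_mul_inv_eq_inv_add_mul (hm (k + 1) (by omega) (by omega))
        (hm (m - 1 - k + 1) (by omega) (by omega))
        (by rw [← Nat.cast_add]; exact hm _ (by omega) (by omega))
      rw [← Nat.cast_add] at partialFraction
      rw [signedInv, signedInv, pow_add]
      linear_combination (-1) ^ (k + 1) * (-1) ^ (m - 1 - k + 1) * partialFraction
    rw [sum_range_succ, sum_range_succ', sum_congr rfl interior, ← mul_sum, sum_add_distrib,
      sum_range_reflect (fun k => ((k + 1 : ℕ) : F)⁻¹), sum_range_succ' _ m]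
    simp only [signedInv, Nat.cast_zero, inv_zero, Nat.sub_self]
    ring

end HarmonicSums

section ModPrime

lemma neg_one_pow_sub_of_odd {R : Type*} [Ring R] {k N : ℕ} (hN : Odd N) (hk : k ≤ N) :
    (-1 : R) ^ (N - k) = -(-1) ^ k := by
  rcases Nat.even_or_odd k with hkE | hkO
  · rw [hkE.neg_one_pow, (Nat.Odd.sub_even hk hN hkE).neg_one_pow]
  · rw [hkO.neg_one_pow, (Nat.Odd.sub_odd hN hkO).neg_one_pow, neg_neg]

lemma natCast_self_sub {k N : ℕ} (hk : k ≤ N) : ((N - k : ℕ) : ZMod N) = -k := by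
  rw [Nat.cast_sub hk, ZMod.natCast_self, zero_sub]

variable {p : ℕ} [Fact p.Prime]

lemma natCast_ne_zero_of_lt_prime {k : ℕ} (hk : 0 < k) (hkp : k < p) : (k : ZMod p) ≠ 0 := by
  rw [Ne, ZMod.natCast_eq_zero_iff]
  exact Nat.not_dvd_of_pos_of_lt hk hkp

lemma two_ne_zero_of_odd_prime (hp : Odd p) : (2 : ZMod p) ≠ 0 := by
  have hp1 := (Fact.out : p.Prime).two_le
  obtain ⟨n, rfl⟩ := hp
  exact_mod_cast natCast_ne_zero_of_lt_prime (p := 2 * n + 1) two_pos (by omega)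

lemma four_ne_zero_of_odd_prime (hp : Odd p) : (4 : ZMod p) ≠ 0 := by
  rw [← show (2 : ZMod p) * 2 = 4 by norm_num]
  exact mul_ne_zero (two_ne_zero_of_odd_prime hp) (two_ne_zero_of_odd_prime hp)

lemma signedInv_sub (hp : Odd p) {k : ℕ} (hk : k ≤ p) :
    signedInv (ZMod p) (p - k) = signedInv (ZMod p) k := by
  rw [signedInv, signedInv, neg_one_pow_sub_of_odd hp hk, natCast_self_sub hk, inv_neg,
    neg_mul_neg]

lemma sum_range_inv_pow_eq_zero {i : ℕ} (hi : i < p - 1) :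
    ∑ k ∈ range p, (k : ZMod p)⁻¹ ^ i = 0 := by
  have toZMod : ∑ k ∈ range p, (k : ZMod p)⁻¹ ^ i = ∑ x : ZMod p, x⁻¹ ^ i :=
    sum_bij' (fun k _ => (k : ZMod p)) (fun x _ => x.val) (by simp)
      (fun x _ => mem_range.mpr x.val_lt) (fun k hk => ZMod.val_cast_of_lt (mem_range.mp hk))
      (fun x _ => ZMod.natCast_zmod_val x) (by simp)
  rw [toZMod, Fintype.sum_equiv (Equiv.inv (ZMod p)) (·⁻¹ ^ i) (· ^ i) fun _ => rfl]
  exact FiniteField.sum_pow_lt_card_sub_one (ZMod p) i (by rwa [ZMod.card])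

lemma sum_range_inv_eq_zero (hp : Odd p) : ∑ k ∈ range p, (k : ZMod p)⁻¹ = 0 := by
  have one_lt : 1 < p - 1 := by
    have := (Fact.out : p.Prime).two_le
    obtain ⟨n, hn⟩ := hp
    omega
  simpa only [pow_one] using sum_range_inv_pow_eq_zero one_lt

lemma sum_range_half_inv_sq {n : ℕ} (hn : p = 2 * n + 1) (hp3 : 3 < p) :
    ∑ k ∈ range (n + 1), (k : ZMod p)⁻¹ ^ 2 = 0 := by
  have hodd : Odd p := ⟨n, hn⟩
  have reflect := sum_range_add_reflect (fun k => (k : ZMod p)⁻¹ ^ 2) n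
  have symm : ∀ k ∈ range (n + 1), (k : ZMod p)⁻¹ ^ 2 + ((2 * n + 1 - k : ℕ) : ZMod p)⁻¹ ^ 2 =
      2 * (k : ZMod p)⁻¹ ^ 2 := fun k hk => by
    rw [← hn, natCast_self_sub (by have := mem_range.mp hk; omega), inv_neg, neg_sq, two_mul]
  rw [sum_congr rfl symm, ← mul_sum, show 2 * n + 2 = p + 1 by omega, sum_range_succ _ p,
    sum_range_inv_pow_eq_zero (by omega), ZMod.natCast_self] at reflect
  simpa [two_ne_zero_of_odd_prime hodd] using reflect

lemma sum_range_sub_inv (hp : Odd p) {k : ℕ} (hk : k ≤ p) :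
    ∑ i ∈ range (p - k), (i : ZMod p)⁻¹ = harmonicSum (ZMod p) k := by
  have split := sum_range_sub_add_sum_reflect (fun i => (i : ZMod p)⁻¹) hk
  have antisymm : ∀ i ∈ range (k + 1), ((p - i : ℕ) : ZMod p)⁻¹ = -(i : ZMod p)⁻¹ := fun i hi => by
    rw [natCast_self_sub (by have := mem_range.mp hi; omega), inv_neg]
  rw [sum_congr rfl antisymm, sum_neg_distrib, sum_range_succ _ p, sum_range_inv_eq_zero hp,
    ZMod.natCast_self, inv_zero, add_zero] at split
  exact eq_of_sub_eq_zero (sub_eq_add_neg _ (harmonicSum (ZMod p) k) ▸ split)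

lemma harmonicSum_half {n : ℕ} (hn : p = 2 * n + 1) :
    harmonicSum (ZMod p) n = ∑ k ∈ range p, signedInv (ZMod p) k := by
  have h2 : (2 : ZMod p) ≠ 0 := two_ne_zero_of_odd_prime ⟨n, hn⟩
  have even := two_mul_sum_filter_even (range p) fun k => (k : ZMod p)⁻¹
  calc harmonicSum (ZMod p) n
      = 2 * ∑ k ∈ range (n + 1), ((2 * k : ℕ) : ZMod p)⁻¹ := by
        simp only [harmonicSum, Nat.cast_mul, mul_inv, ← mul_sum, Nat.cast_two,
          mul_inv_cancel_left₀ h2]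
    _ = 2 * ∑ k ∈ range p with Even k, (k : ZMod p)⁻¹ := by
        rw [← sum_range_filter_even fun k => (k : ZMod p)⁻¹, ← hn]
    _ = ∑ k ∈ range p, signedInv (ZMod p) k := by
        rw [even, sum_range_inv_eq_zero ⟨n, hn⟩, zero_add]
        rfl

lemma sum_range_signedInv_mul_sum_inv (hp : Odd p) (hp3 : 3 < p) :
    4 * ∑ k ∈ range p, signedInv (ZMod p) k * ∑ i ∈ range k, (i : ZMod p)⁻¹ =
      (∑ k ∈ range p, signedInv (ZMod p) k) ^ 2 := by
  have convolution := two_mul_sum_convolution_of_symm (f := signedInv (ZMod p))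
    (by simp [signedInv]) fun k hk => signedInv_sub hp hk
  have inner : ∀ m ∈ range p,
      ∑ k ∈ range (m + 1), signedInv (ZMod p) k * signedInv (ZMod p) (m - k) =
        2 * (signedInv (ZMod p) m * ∑ i ∈ range m, (i : ZMod p)⁻¹) := fun m hm =>
    sum_signedInv_convolution fun k hk hkm =>
      natCast_ne_zero_of_lt_prime hk (hkm.trans_lt (mem_range.mp hm))
  simp only [signedInv_sq] at convolution
  rw [sum_congr rfl inner, ← mul_sum, sum_range_inv_pow_eq_zero (by omega)] at convolution
  linear_combination convolution

lemma two_mul_sum_half_signedInv_mul_harmonicSum_eq_add {n : ℕ} (hn : p = 2 * n + 1) :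
    2 * ∑ k ∈ range (n + 1), signedInv (ZMod p) k * harmonicSum (ZMod p) k =
      ∑ k ∈ range p, signedInv (ZMod p) k * ∑ i ∈ range k, (i : ZMod p)⁻¹ +
        ∑ k ∈ range (n + 1), (-1) ^ k * (k : ZMod p)⁻¹ ^ 2 := by
  have reflect := sum_range_add_reflect
    (fun k => signedInv (ZMod p) k * ∑ i ∈ range k, (i : ZMod p)⁻¹) n
  have pair : ∀ k ∈ range (n + 1),
      signedInv (ZMod p) k * ∑ i ∈ range k, (i : ZMod p)⁻¹ +
        signedInv (ZMod p) (2 * n + 1 - k) * ∑ i ∈ range (2 * n + 1 - k), (i : ZMod p)⁻¹ =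
      2 * (signedInv (ZMod p) k * harmonicSum (ZMod p) k) - (-1) ^ k * (k : ZMod p)⁻¹ ^ 2 :=
    fun k hk => by
      have hkp : k ≤ p := by have := mem_range.mp hk; omega
      rw [← hn, signedInv_sub ⟨n, hn⟩ hkp, sum_range_sub_inv ⟨n, hn⟩ hkp, harmonicSum,
        sum_range_succ, signedInv]
      ring
  rw [sum_congr rfl pair, sum_sub_distrib, ← mul_sum, show 2 * n + 2 = p + 1 by omega,
    sum_range_succ _ p, signedInv, ZMod.natCast_self, inv_zero] at reflect
  linear_combination reflect

end ModPrime

section FermatQuotient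

/-- The Fermat quotient `q_p(a) = (a^(p-1) - 1) / p`; the natural-number division is exact when `p`
is a prime not dividing `a`. -/
def fermatQuotient (p a : ℕ) : ℕ := (a ^ (p - 1) - 1) / p

variable {p : ℕ} [Fact p.Prime]

lemma mul_fermatQuotient_add_one {a : ℕ} (h : a.Coprime p) :
    p * fermatQuotient p a + 1 = a ^ (p - 1) := by
  have one_le : 1 ≤ a ^ (p - 1) := Nat.one_le_iff_ne_zero.mpr fun h0 => by
    have ha := eq_zero_of_pow_eq_zero h0
    have := (Fact.out : p.Prime).ne_one
    simp_all
  have dvd : p ∣ a ^ (p - 1) - 1 :=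
    (Nat.modEq_iff_dvd' one_le).mp (Nat.ModEq.pow_card_sub_one_eq_one Fact.out h).symm
  rw [fermatQuotient, Nat.mul_div_cancel' dvd, Nat.sub_add_cancel one_le]

lemma fermatQuotient_cast {a : ℕ} (h : a.Coprime p) :
    (fermatQuotient p a : ℚ) = ((a : ℚ) ^ (p - 1) - 1) / p := by
  have hp0 : (p : ℚ) ≠ 0 := Nat.cast_ne_zero.mpr (Fact.out : p.Prime).ne_zero
  rw [eq_div_iff hp0, eq_sub_iff_add_eq, mul_comm]
  exact_mod_cast mul_fermatQuotient_add_one h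

lemma choose_pred_prime {k : ℕ} (hk : k < p) : ((p - 1).choose k : ZMod p) = (-1) ^ k := by
  induction k with
  | zero => simp
  | succ k ih =>
    have pascal : p.choose (k + 1) = (p - 1).choose k + (p - 1).choose (k + 1) := by
      conv_lhs => rw [← Nat.sub_add_cancel (Fact.out : p.Prime).one_le, Nat.choose_succ_succ]
    have vanish : ((p.choose (k + 1) : ℕ) : ZMod p) = 0 :=
      (ZMod.natCast_eq_zero_iff _ _).mpr
        ((Fact.out : p.Prime).dvd_choose_self k.succ_ne_zero hk)
    rw [pascal, Nat.cast_add, ih (by omega)] at vanish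
    rw [pow_succ]
    linear_combination vanish

lemma choose_prime_div {k : ℕ} (hk : k < p) :
    ((p.choose k / p : ℕ) : ZMod p) = -signedInv (ZMod p) k := by
  have hp : p.Prime := Fact.out
  cases k with
  | zero => simp [signedInv, Nat.div_eq_of_lt hp.one_lt]
  | succ k =>
    obtain ⟨c, hc⟩ := hp.dvd_choose_self k.succ_ne_zero hk
    have absorb : (p - 1).choose k = c * (k + 1) := by
      have := Nat.add_one_mul_choose_eq (p - 1) k
      rw [Nat.sub_add_cancel hp.one_le, hc, mul_assoc] at this
      exact Nat.eq_of_mul_eq_mul_left hp.pos this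
    have hk0 : ((k + 1 : ℕ) : ZMod p) ≠ 0 := natCast_ne_zero_of_lt_prime k.succ_pos hk
    have reduced := choose_pred_prime (p := p) (k := k) (by omega)
    rw [absorb, Nat.cast_mul] at reduced
    rw [hc, Nat.mul_div_cancel_left c hp.pos, signedInv, ← div_eq_mul_inv, ← neg_div,
      eq_div_iff hk0, reduced, pow_succ]
    ring

lemma mul_sum_choose_prime_div_add_two :
    p * ∑ k ∈ range p, p.choose k / p + 2 = 2 ^ p := by
  have hp : p.Prime := Fact.out
  obtain ⟨m, hm⟩ : ∃ m, p = m + 1 := ⟨p - 1, (Nat.sub_add_cancel hp.one_le).symm⟩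
  have exact_div : ∀ k ∈ range m, p * (p.choose (k + 1) / p) = p.choose (k + 1) := fun k hk =>
    Nat.mul_div_cancel' (hp.dvd_choose_self k.succ_ne_zero (by have := mem_range.mp hk; omega))
  have split : ∀ f : ℕ → ℕ, ∑ k ∈ range p, f k = ∑ k ∈ range m, f (k + 1) + f 0 := fun f => by
    rw [hm, sum_range_succ']
  rw [← Nat.sum_range_choose, sum_range_succ, split, split, mul_add, mul_sum,
    sum_congr rfl exact_div, Nat.choose_zero_right, Nat.div_eq_of_lt hp.one_lt, mul_zero, add_zero,
    Nat.choose_self]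

lemma sum_signedInv_eq_fermatQuotient (hp : Odd p) :
    ∑ k ∈ range p, signedInv (ZMod p) k = -2 * (fermatQuotient p 2 : ZMod p) := by
  have hpp : p.Prime := Fact.out
  have quotients : ∑ k ∈ range p, p.choose k / p = 2 * fermatQuotient p 2 := by
    have pow_eq := mul_sum_choose_prime_div_add_two (p := p)
    rw [← Nat.sub_add_cancel hpp.one_le, pow_succ, Nat.sub_add_cancel hpp.one_le,
      ← mul_fermatQuotient_add_one (Nat.coprime_two_left.mpr hp)] at pow_eq
    exact Nat.eq_of_mul_eq_mul_left hpp.pos (by linarith)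
  have reduced := congrArg (Nat.cast : ℕ → ZMod p) quotients
  rw [Nat.cast_sum, sum_congr rfl fun k hk => choose_prime_div (mem_range.mp hk), sum_neg_distrib,
    Nat.cast_mul, Nat.cast_two] at reduced
  linear_combination -reduced

end FermatQuotient

section EulerNumbers

lemma eulerNumber_recurrence (n : ℕ) :
    ∑ j ∈ range (n + 1), (if Even (n - j) then (n.choose j : ℚ) * eulerNumber j else 0) =
      if n = 0 then 1 else 0 := by
  cases n with
  | zero => simp [eulerNumber]
  | succ n =>
    have unfolded : eulerNumber (n + 1) = -∑ j ∈ range (n + 1),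
        if Even (n + 1 - j) then ((n + 1).choose j : ℚ) * eulerNumber j else 0 := by
      rw [eulerNumber, sum_attach (range (n + 1)) fun j =>
        if Even (n + 1 - j) then ((n + 1).choose (n + 1 - j) : ℚ) * eulerNumber j else 0]
      refine congrArg Neg.neg (sum_congr rfl fun j hj => ?_)
      rw [Nat.choose_symm (mem_range.mp hj).le]
    simp [sum_range_succ _ (n + 1), unfolded]

lemma eulerNumber_mem_range_intCast (n : ℕ) : eulerNumber n ∈ (Int.castRingHom ℚ).range := by
  induction n using Nat.strong_induction_on with
  | _ n ih =>
    cases n with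
    | zero => exact eulerNumber.eq_1 ▸ one_mem _
    | succ n =>
      rw [eulerNumber]
      refine neg_mem (sum_mem fun j _ => ?_)
      split_ifs
      · exact mul_mem (natCast_mem _ _) (ih j (mem_range.mp j.2))
      · exact zero_mem _

/-- The Euler number `E_n` as an integer, so that it can be mapped to any commutative ring. -/
def eulerInt (n : ℕ) : ℤ := (eulerNumber n).num

lemma eulerInt_cast (n : ℕ) : (eulerInt n : ℚ) = eulerNumber n := by
  obtain ⟨z, hz⟩ := eulerNumber_mem_range_intCast n
  rw [eulerInt, ← hz, eq_intCast, Rat.num_intCast]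

lemma eulerInt_recurrence (n : ℕ) :
    ∑ j ∈ range (n + 1), (if Even (n - j) then (n.choose j : ℤ) * eulerInt j else 0) =
      if n = 0 then 1 else 0 := by
  have rational := eulerNumber_recurrence n
  simp only [← eulerInt_cast] at rational
  exact_mod_cast rational

lemma eulerInt_of_odd {n : ℕ} (hn : Odd n) : eulerInt n = 0 := by
  induction n using Nat.strong_induction_on with
  | _ n ih =>
    have vanish : ∀ j ∈ range n,
        (if Even (n - j) then (n.choose j : ℤ) * eulerInt j else 0) = 0 := fun j hj => by
      have hjn := mem_range.mp hj
      split_ifs with heven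
      · rw [ih j hjn (by grind), mul_zero]
      · rfl
    simpa [sum_range_succ, sum_eq_zero vanish, hn.pos.ne'] using eulerInt_recurrence n

variable (R : Type*) [CommRing R]

/-- The umbra of the Euler numbers: the linear functional on polynomials with `X ^ n ↦ E_n`. Thus
`eulerUmbra R (taylor r f)` is the value of the symbolic expression `f (E + r)`. -/
noncomputable def eulerUmbra : R[X] →ₗ[R] R :=
  Polynomial.lsum fun n => (eulerInt n : R) • LinearMap.id

variable {R}

lemma eulerUmbra_monomial (n : ℕ) (a : R) : eulerUmbra R (monomial n a) = eulerInt n * a := by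
  simp [eulerUmbra, lsum_apply]

lemma eulerUmbra_taylor_monomial (r : R) (n : ℕ) (a : R) :
    eulerUmbra R (taylor r (monomial n a)) =
      ∑ j ∈ range (n + 1), r ^ (n - j) * (n.choose j * eulerInt j) * a := by
  have term (j : ℕ) : C a * (X ^ j * C r ^ (n - j) * (n.choose j : R[X])) =
      monomial j (a * r ^ (n - j) * n.choose j) := by
    rw [← C_mul_X_pow_eq_monomial, C_mul, C_mul, C_pow, C_eq_natCast]
    ring
  rw [taylor_monomial, add_pow, mul_sum, map_sum]
  refine sum_congr rfl fun j _ => ?_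
  rw [term, eulerUmbra_monomial]
  ring

lemma eulerUmbra_taylor_one_add_taylor_neg_one (f : R[X]) :
    eulerUmbra R (taylor 1 f) + eulerUmbra R (taylor (-1) f) = 2 * f.eval 0 := by
  induction f using Polynomial.induction_on' with
  | add f g hf hg =>
    simp only [map_add, eval_add]
    linear_combination hf + hg
  | monomial n a =>
    have recurrence := congrArg (Int.cast : ℤ → R) (eulerInt_recurrence n)
    have pair : ∀ j ∈ range (n + 1), 1 ^ (n - j) * (n.choose j * eulerInt j) * a +
        (-1) ^ (n - j) * (n.choose j * eulerInt j) * a = 2 * a *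
          ((if Even (n - j) then (n.choose j : ℤ) * eulerInt j else 0 : ℤ) : R) := fun j _ => by
      rcases Nat.even_or_odd (n - j) with h | h
      · rw [if_pos h, h.neg_one_pow]
        push_cast
        ring
      · rw [if_neg (Nat.not_even_iff_odd.mpr h), h.neg_one_pow]
        push_cast
        ring
    rw [eulerUmbra_taylor_monomial, eulerUmbra_taylor_monomial, ← sum_add_distrib,
      sum_congr rfl pair, ← mul_sum, ← Int.cast_sum, recurrence, eval_monomial]
    rcases eq_or_ne n 0 with rfl | hn <;> simp [*]

lemma eulerUmbra_taylor_add_one_add_taylor_sub_one (x : R) (f : R[X]) :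
    eulerUmbra R (taylor (x + 1) f) + eulerUmbra R (taylor (x - 1) f) = 2 * f.eval x := by
  have shifted := eulerUmbra_taylor_one_add_taylor_neg_one (taylor x f)
  rwa [taylor_taylor, taylor_taylor, taylor_eval, zero_add, add_comm 1, neg_add_eq_sub] at shifted

lemma two_mul_alternating_sum_eval (f : R[X]) (n : ℕ) :
    2 * ∑ k ∈ range (n + 1), (-1) ^ k * f.eval ((2 * k : ℕ) : R) =
      (-1) ^ n * eulerUmbra R (taylor ((2 * n + 1 : ℕ) : R) f) +
        eulerUmbra R (taylor (-1) f) := by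
  induction n with
  | zero => simp [← eulerUmbra_taylor_one_add_taylor_neg_one]
  | succ n ih =>
    have next := eulerUmbra_taylor_add_one_add_taylor_sub_one ((2 * (n + 1) : ℕ) : R) f
    rw [show ((2 * (n + 1) : ℕ) : R) - 1 = (2 * n + 1 : ℕ) by push_cast; ring] at next
    rw [sum_range_succ, mul_add, ih, Nat.cast_succ (2 * (n + 1)), pow_succ]
    linear_combination (-1) ^ n * next

lemma eulerUmbra_taylor_neg_one_X_pow {n : ℕ} (hn : Even n) (hn0 : n ≠ 0) :
    eulerUmbra R (taylor (-1) (X ^ n)) = 0 := by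
  have recurrence := congrArg (Int.cast : ℤ → R) (eulerInt_recurrence n)
  rw [if_neg hn0, Int.cast_zero, Int.cast_sum] at recurrence
  rw [← monomial_one_right_eq_X_pow, eulerUmbra_taylor_monomial, ← recurrence]
  refine sum_congr rfl fun j hj => ?_
  have hjn := Nat.lt_succ_iff.mp (mem_range.mp hj)
  split_ifs with heven
  · rw [heven.neg_one_pow]
    push_cast
    ring
  · have hj : Odd j := by grind
    simp [eulerInt_of_odd hj]

end EulerNumbers

section Congruence

variable {p : ℕ} [Fact p.Prime]

lemma inv_sq_eq_pow_sub_three (hp3 : 3 < p) (x : ZMod p) : x⁻¹ ^ 2 = x ^ (p - 3) := by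
  rcases eq_or_ne x 0 with rfl | hx
  · rw [inv_zero, zero_pow two_ne_zero, zero_pow (by omega)]
  · rw [inv_pow]
    refine inv_eq_of_mul_eq_one_right ?_
    rw [← pow_add, show 2 + (p - 3) = p - 1 by omega, ZMod.pow_card_sub_one_eq_one hx]

lemma sum_range_half_neg_one_pow_mul_inv_sq {n : ℕ} (hn : p = 2 * n + 1) (hp3 : 3 < p) :
    ∑ k ∈ range (n + 1), (-1) ^ k * (k : ZMod p)⁻¹ ^ 2 =
      2 * ((-1) ^ n * (eulerInt (p - 3) : ZMod p)) := by
  have h2 : (2 : ZMod p) ≠ 0 := two_ne_zero_of_odd_prime ⟨n, hn⟩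
  have telescoped := two_mul_alternating_sum_eval (R := ZMod p) (X ^ (p - 3)) n
  have summand : ∀ k ∈ range (n + 1), (-1) ^ k * (k : ZMod p)⁻¹ ^ 2 =
      4 * ((-1) ^ k * ((2 * k : ℕ) : ZMod p) ^ (p - 3)) := fun k _ => by
    rw [← inv_sq_eq_pow_sub_three hp3, Nat.cast_mul, Nat.cast_two]
    field_simp
    ring
  have even : Even (p - 3) := ⟨n - 1, by omega⟩
  rw [← hn, ZMod.natCast_self, taylor_zero, eulerUmbra_taylor_neg_one_X_pow even (by omega),
    ← monomial_one_right_eq_X_pow, eulerUmbra_monomial] at telescoped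
  simp only [eval_monomial, one_mul] at telescoped
  rw [sum_congr rfl summand, ← mul_sum]
  linear_combination 2 * telescoped

lemma sum_half_inv_mul_harmonicSum {n : ℕ} (hn : p = 2 * n + 1) (hp3 : 3 < p) :
    ∑ k ∈ range (n + 1), (k : ZMod p)⁻¹ * harmonicSum (ZMod p) k =
      2 * (fermatQuotient p 2 : ZMod p) ^ 2 := by
  have square : 2 * ∑ k ∈ range (n + 1), (k : ZMod p)⁻¹ * harmonicSum (ZMod p) k =
      harmonicSum (ZMod p) n ^ 2 + ∑ k ∈ range (n + 1), (k : ZMod p)⁻¹ ^ 2 :=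
    two_mul_sum_mul_sum_range _ _
  rw [sum_range_half_inv_sq hn hp3, harmonicSum_half hn,
    sum_signedInv_eq_fermatQuotient ⟨n, hn⟩] at square
  refine mul_left_cancel₀ (two_ne_zero_of_odd_prime (p := p) ⟨n, hn⟩) ?_
  linear_combination square

lemma two_mul_sum_half_signedInv_mul_harmonicSum_eq_fermatQuotient_sq_add {n : ℕ}
    (hn : p = 2 * n + 1) (hp3 : 3 < p) :
    2 * ∑ k ∈ range (n + 1), signedInv (ZMod p) k * harmonicSum (ZMod p) k =
      (fermatQuotient p 2 : ZMod p) ^ 2 + 2 * ((-1) ^ n * eulerInt (p - 3)) := by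
  have convolved := sum_range_signedInv_mul_sum_inv ⟨n, hn⟩ hp3
  rw [sum_signedInv_eq_fermatQuotient ⟨n, hn⟩] at convolved
  rw [two_mul_sum_half_signedInv_mul_harmonicSum_eq_add hn,
    sum_range_half_neg_one_pow_mul_inv_sq hn hp3]
  refine mul_left_cancel₀ (four_ne_zero_of_odd_prime (p := p) ⟨n, hn⟩) ?_
  linear_combination convolved

lemma sum_half_even_harmonicSum_div {n : ℕ} (hn : p = 2 * n + 1) (hp3 : 3 < p) :
    ∑ k ∈ range (n + 1) with Even k, harmonicSum (ZMod p) k / k =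
      5 / 4 * (fermatQuotient p 2 : ZMod p) ^ 2 + (-1) ^ n * eulerInt (p - 3) / 2 := by
  have h2 : (2 : ZMod p) ≠ 0 := two_ne_zero_of_odd_prime ⟨n, hn⟩
  have h4 : (4 : ZMod p) ≠ 0 := four_ne_zero_of_odd_prime ⟨n, hn⟩
  have halves : 2 * ∑ k ∈ range (n + 1) with Even k, harmonicSum (ZMod p) k / k =
      ∑ k ∈ range (n + 1), (k : ZMod p)⁻¹ * harmonicSum (ZMod p) k +
        ∑ k ∈ range (n + 1), signedInv (ZMod p) k * harmonicSum (ZMod p) k := by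
    simpa only [signedInv, mul_assoc, div_eq_inv_mul] using two_mul_sum_filter_even (range (n + 1))
      fun k => (k : ZMod p)⁻¹ * harmonicSum (ZMod p) k
  have plain := sum_half_inv_mul_harmonicSum hn hp3
  have alternating := two_mul_sum_half_signedInv_mul_harmonicSum_eq_fermatQuotient_sq_add hn hp3
  have quadruple : 4 * ∑ k ∈ range (n + 1) with Even k, harmonicSum (ZMod p) k / k =
      5 * (fermatQuotient p 2 : ZMod p) ^ 2 + 2 * ((-1) ^ n * eulerInt (p - 3)) := by
    linear_combination 2 * halves + 2 * plain + alternating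
  rw [← mul_right_inj' h4, quadruple]
  field_simp
  ring

end Congruence

section Reduction

variable {F : Type*} [Field F]

/-- The rational number `a` is integral at the characteristic of `F` and its residue is `x`. The
condition on the denominator is needed because the cast `ℚ → F` sends `a` to a junk value when
the denominator of `a` vanishes in `F`. -/
structure ReducesTo (a : ℚ) (x : F) : Prop where
  den_ne_zero : (a.den : F) ≠ 0
  cast_eq : (a : F) = x

namespace ReducesTo

variable {a b : ℚ} {x y : F}

lemma intCast (z : ℤ) : ReducesTo (z : ℚ) (z : F) := ⟨by simp, Rat.cast_intCast z⟩

lemma natCast (n : ℕ) : ReducesTo (n : ℚ) (n : F) := ⟨by simp, Rat.cast_natCast n⟩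

lemma ofNat (n : ℕ) [n.AtLeastTwo] : ReducesTo (ofNat(n) : ℚ) (ofNat(n) : F) :=
  mod_cast natCast n

lemma zero : ReducesTo 0 (0 : F) := by simpa using natCast (F := F) 0

lemma one : ReducesTo 1 (1 : F) := by simpa using natCast (F := F) 1

lemma add (ha : ReducesTo a x) (hb : ReducesTo b y) : ReducesTo (a + b) (x + y) where
  den_ne_zero h := mul_ne_zero ha.den_ne_zero hb.den_ne_zero <| by
    obtain ⟨c, hc⟩ := Rat.add_den_dvd a b
    rw [← Nat.cast_mul, hc, Nat.cast_mul, h, zero_mul]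
  cast_eq := by rw [Rat.cast_add_of_ne_zero ha.den_ne_zero hb.den_ne_zero, ha.cast_eq, hb.cast_eq]

lemma mul (ha : ReducesTo a x) (hb : ReducesTo b y) : ReducesTo (a * b) (x * y) where
  den_ne_zero h := mul_ne_zero ha.den_ne_zero hb.den_ne_zero <| by
    obtain ⟨c, hc⟩ := Rat.mul_den_dvd a b
    rw [← Nat.cast_mul, hc, Nat.cast_mul, h, zero_mul]
  cast_eq := by rw [Rat.cast_mul_of_ne_zero ha.den_ne_zero hb.den_ne_zero, ha.cast_eq, hb.cast_eq]

lemma neg (ha : ReducesTo a x) : ReducesTo (-a) (-x) :=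
  ⟨by simpa using ha.den_ne_zero, by rw [Rat.cast_neg, ha.cast_eq]⟩

lemma pow (ha : ReducesTo a x) (n : ℕ) : ReducesTo (a ^ n) (x ^ n) := by
  induction n with
  | zero => simpa only [pow_zero] using one
  | succ n ih => simpa only [pow_succ] using ih.mul ha

lemma inv (ha : ReducesTo a x) (hx : x ≠ 0) : ReducesTo a⁻¹ x⁻¹ := by
  have num_ne_zero : (a.num : F) ≠ 0 := fun h =>
    hx (by rw [← ha.cast_eq, Rat.cast_def, h, zero_div])
  refine ⟨?_, by rw [Rat.cast_inv_of_ne_zero num_ne_zero, ha.cast_eq]⟩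
  rw [Rat.den_inv, if_neg fun h => num_ne_zero (by rw [h, Int.cast_zero])]
  refine fun h => num_ne_zero ?_
  rcases Int.natAbs_eq a.num with e | e <;> rw [e] <;>
    simp only [Int.cast_neg, Int.cast_natCast, h, neg_zero]

lemma div (ha : ReducesTo a x) (hb : ReducesTo b y) (hy : y ≠ 0) : ReducesTo (a / b) (x / y) := by
  simpa only [div_eq_mul_inv] using ha.mul (hb.inv hy)

lemma sum {ι : Type*} {s : Finset ι} {f : ι → ℚ} {g : ι → F}
    (h : ∀ i ∈ s, ReducesTo (f i) (g i)) : ReducesTo (∑ i ∈ s, f i) (∑ i ∈ s, g i) := by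
  classical
  induction s using Finset.induction_on with
  | empty => exact zero
  | insert i s hi ih =>
    rw [sum_insert hi, sum_insert hi]
    exact (h i (mem_insert_self i s)).add (ih fun j hj => h j (mem_insert_of_mem hj))

end ReducesTo

variable {p : ℕ} [Fact p.Prime]

lemma ReducesTo.ratModEq {a b : ℚ} {x : ZMod p} (ha : ReducesTo a x) (hb : ReducesTo b x) :
    ratModEq p a b := by
  obtain ⟨hden, hcast⟩ := ha.add hb.neg
  rwa [add_neg_cancel, Rat.cast_def, div_eq_zero_iff, or_iff_left hden, ← sub_eq_add_neg,
    ZMod.intCast_zmod_eq_zero_iff_dvd] at hcast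

lemma reducesTo_H {n : ℕ} (hn : n < p) : ReducesTo (H n) (harmonicSum (ZMod p) n) := by
  rw [harmonicSum, ← sum_Icc_one_eq_sum_range _ (by simp)]
  refine ReducesTo.sum fun k hk => ?_
  have hk := mem_Icc.mp hk
  rw [one_div]
  exact (ReducesTo.natCast k).inv (natCast_ne_zero_of_lt_prime (by omega) (by omega))

lemma reducesTo_sum_Icc_even_H_div {n : ℕ} (hn : n < p) :
    ReducesTo (∑ k ∈ Icc 1 n with Even k, H k / k)
      (∑ k ∈ range (n + 1) with Even k, harmonicSum (ZMod p) k / k) := by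
  rw [sum_filter, sum_filter, ← sum_Icc_one_eq_sum_range _ (by simp), ← sum_filter, ← sum_filter]
  refine ReducesTo.sum fun k hk => ?_
  obtain ⟨hk1, hkn⟩ := mem_Icc.mp (mem_filter.mp hk).1
  exact (reducesTo_H (by omega)).div (.natCast k) (natCast_ne_zero_of_lt_prime hk1 (by omega))

end Reduction

theorem stmt15 (p : ℕ) (hp : p.Prime) (hp3 : 3 < p) :
    ratModEq p
      (∑ k ∈ (Finset.Icc 1 ((p - 1) / 2)).filter (fun k => Even k), H k / k)
      (5 / 4 * (((2 : ℚ) ^ (p - 1) - 1) / p) ^ 2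
        + (-1) ^ ((p - 1) / 2) * eulerNumber (p - 3) / 2) := by
  have : Fact p.Prime := ⟨hp⟩
  have hodd := hp.odd_of_ne_two (by omega)
  have ⟨n, hn⟩ := hodd
  rw [show (p - 1) / 2 = n by omega]
  have quotient : (fermatQuotient p 2 : ℚ) = ((2 : ℚ) ^ (p - 1) - 1) / p :=
    fermatQuotient_cast (Nat.coprime_two_left.mpr hodd)
  have left := reducesTo_sum_Icc_even_H_div (p := p) (n := n) (by omega)
  rw [sum_half_even_harmonicSum_div hn hp3] at left
  have right : ReducesTo
      (5 / 4 * (fermatQuotient p 2 : ℚ) ^ 2 + (-1) ^ n * (eulerInt (p - 3) : ℚ) / 2)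
      (5 / 4 * (fermatQuotient p 2 : ZMod p) ^ 2 + (-1) ^ n * (eulerInt (p - 3) : ZMod p) / 2) :=
    (((ReducesTo.ofNat 5).div (.ofNat 4) (four_ne_zero_of_odd_prime hodd)).mul
      ((ReducesTo.natCast _).pow 2)).add
      (((ReducesTo.one.neg.pow n).mul (.intCast _)).div (.ofNat 2) (two_ne_zero_of_odd_prime hodd))
  simpa only [quotient, eulerInt_cast] using left.ratModEq right
end
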